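/- Under the long-run contractivity assumption and the self-map assumption, there exists n ∈ ℕ such that T_σ^n is a contraction mapping on 𝒱 (with the supremum metric) for every feasible policy σ ∈ Σ, and T^n is a contraction mapping on 𝒱̂; that is, T_σ and T are eventually contracting. -/

import Mathlib

open MeasureTheory ProbabilityTheory Filter Topology

/-- `expProd Q β n z` is the expectation `E_z[∏_{t=0}^{n-1} β(Z_t)]` of the product of
discount factors along the Markov chain generated by the kernel `Q` and started at `z`,
encoded by the canonical iterated-integral recursion (the empty product is `1`). -/
noncomputable def expProd {Z : Type*} [MeasurableSpace Z] (Q : ProbabilityTheory.Kernel Z Z)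
    (β : Z → ℝ) : ℕ → Z → ℝ
  | 0 => fun _ => 1
  | n + 1 => fun z => β z * ∫ z', expProd Q β n z' ∂(Q z)

/-- `mSup Q β n = sup_{z ∈ Z} E_z[∏_{t=0}^{n-1} β(Z_t)]`. -/
noncomputable def mSup {Z : Type*} [MeasurableSpace Z] (Q : ProbabilityTheory.Kernel Z Z)
    (β : Z → ℝ) (n : ℕ) : ℝ :=
  ⨆ z, expProd Q β n z

/-- The policy operator `(T_σ v)(x,z) = H(x,z,σ(x,z),v)`. -/
noncomputable def Tpol {X Z A : Type*} (H : X → Z → A → ((X × Z) → ℝ) → ℝ)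
    (σ : X × Z → A) (v : (X × Z) → ℝ) : (X × Z) → ℝ :=
  fun p => H p.1 p.2 (σ p) v

/-- The Bellman operator `(T v)(x,z) = sup_{a ∈ Γ(x,z)} H(x,z,a,v)`. -/
noncomputable def TBell {X Z A : Type*} (H : X → Z → A → ((X × Z) → ℝ) → ℝ)
    (Γ : X → Z → Set A) (v : (X × Z) → ℝ) : (X × Z) → ℝ :=
  fun p => sSup ((fun a => H p.1 p.2 a v) '' Γ p.1 p.2)

/-!
Both `T_σ` and `T` satisfy
`|T v (x, z) - T w (x, z)| ≤ β z * ∫ sup_{x'} |v - w| (x', z') Q(z, dz')`: for `T_σ` this is the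
hypothesis on `H`, and for `T` it survives the supremum over actions. The right-hand side depends
on `z` alone, so taking the supremum over `x` on the left lets the bound be iterated, and
monotonicity of `f ↦ β z * ∫ f dQ(z, ·)` gives
`|T^n v (x, z) - T^n w (x, z)| ≤ E_z[∏_{t < n} β(Z_t)] * sup |v - w|`. Hence `T_σ^n` and `T^n`
have Lipschitz modulus `sup_z E_z[∏_{t < n} β(Z_t)]`, uniformly in the policy.
-/

section SSupImage

variable {ι : Type*} {s : Set ι} {f g : ι → ℝ} {D : ℝ}

lemma bddAbove_image_of_le_add (h : ∀ i ∈ s, f i ≤ g i + D) (hg : BddAbove (g '' s)) :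
    BddAbove (f '' s) := by
  obtain ⟨M, hM⟩ := hg
  refine ⟨M + D, Set.forall_mem_image.2 fun i hi => ?_⟩
  linarith [h i hi, hM (Set.mem_image_of_mem g hi)]

lemma sSup_image_le_sSup_image_add (hs : s.Nonempty) (h : ∀ i ∈ s, f i ≤ g i + D)
    (hg : BddAbove (g '' s)) : sSup (f '' s) ≤ sSup (g '' s) + D := by
  refine csSup_le (hs.image f) (Set.forall_mem_image.2 fun i hi => ?_)
  linarith [h i hi, le_csSup hg (Set.mem_image_of_mem g hi)]

lemma abs_sSup_image_sub_sSup_image_le (hs : s.Nonempty) (h : ∀ i ∈ s, |f i - g i| ≤ D) :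
    |sSup (f '' s) - sSup (g '' s)| ≤ D := by
  have hfg : ∀ i ∈ s, f i ≤ g i + D := fun i hi => by linarith [(abs_le.1 (h i hi)).2]
  have hgf : ∀ i ∈ s, g i ≤ f i + D := fun i hi => by linarith [(abs_le.1 (h i hi)).1]
  by_cases hg : BddAbove (g '' s)
  · have hf : BddAbove (f '' s) := bddAbove_image_of_le_add hfg hg
    rw [abs_sub_le_iff, sub_le_iff_le_add', sub_le_iff_le_add']
    exact ⟨sSup_image_le_sSup_image_add hs hfg hg, sSup_image_le_sSup_image_add hs hgf hf⟩
  · -- Both images are unbounded above, so both suprema have the junk value `0`.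
    have hf : ¬ BddAbove (f '' s) := fun hf => hg (bddAbove_image_of_le_add hgf hf)
    obtain ⟨i, hi⟩ := hs
    rw [Real.sSup_of_not_bddAbove hf, Real.sSup_of_not_bddAbove hg, sub_zero, abs_zero]
    exact (abs_nonneg _).trans (h i hi)

end SSupImage

lemma bddAbove_range_abs_sub {ι : Type*} {v w : ι → ℝ} (hv : ∃ M, ∀ i, |v i| ≤ M)
    (hw : ∃ M, ∀ i, |w i| ≤ M) : BddAbove (Set.range fun i => |v i - w i|) := by
  obtain ⟨M, hM⟩ := hv
  obtain ⟨N, hN⟩ := hw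
  exact ⟨M + N, Set.forall_mem_range.2 fun i => (abs_sub _ _).trans (add_le_add (hM i) (hN i))⟩

section ExpProd

variable {Z : Type*} [MeasurableSpace Z] {Q : Kernel Z Z} {β : Z → ℝ}

lemma expProd_nonneg (hβ0 : ∀ z, 0 ≤ β z) : ∀ n z, 0 ≤ expProd Q β n z
  | 0, _ => zero_le_one
  | n + 1, z => mul_nonneg (hβ0 z) (integral_nonneg (expProd_nonneg hβ0 n))

lemma mSup_nonneg (hβ0 : ∀ z, 0 ≤ β z) (n : ℕ) : 0 ≤ mSup Q β n :=
  Real.iSup_nonneg (expProd_nonneg hβ0 n)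

lemma measurable_expProd (hβm : Measurable β) : ∀ n, Measurable (expProd Q β n)
  | 0 => measurable_const
  | n + 1 =>
    hβm.mul (measurable_expProd hβm n).stronglyMeasurable.integral_kernel.measurable

variable [IsFiniteKernel Q]

lemma bddAbove_range_expProd (hβ0 : ∀ z, 0 ≤ β z) (hβb : BddAbove (Set.range β)) (n : ℕ) :
    BddAbove (Set.range (expProd Q β n)) := by
  obtain ⟨C, hC⟩ := hβb
  induction n with
  | zero => exact ⟨1, Set.forall_mem_range.2 fun _ => le_rfl⟩
  | succ n ih =>
    obtain ⟨M, hM⟩ := ih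
    refine ⟨C * (M * Q.bound.toReal), Set.forall_mem_range.2 fun z => ?_⟩
    have hM0 : 0 ≤ M := (expProd_nonneg hβ0 n z).trans (hM ⟨z, rfl⟩)
    have hint : ∫ z', expProd Q β n z' ∂(Q z) ≤ M * Q.bound.toReal :=
      calc ∫ z', expProd Q β n z' ∂(Q z) ≤ ∫ _, M ∂(Q z) :=
            integral_mono_of_nonneg (ae_of_all _ (expProd_nonneg hβ0 n)) (integrable_const M)
              (ae_of_all _ fun z' => hM ⟨z', rfl⟩)
        _ = M * (Q z).real Set.univ := by rw [integral_const, smul_eq_mul, mul_comm]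
        _ ≤ M * Q.bound.toReal := by
            gcongr
            exact ENNReal.toReal_mono Q.bound_ne_top (Q.measure_le_bound z _)
    exact mul_le_mul (hC ⟨z, rfl⟩) hint (integral_nonneg (expProd_nonneg hβ0 n))
      ((hβ0 z).trans (hC ⟨z, rfl⟩))

lemma expProd_le_mSup (hβ0 : ∀ z, 0 ≤ β z) (hβb : BddAbove (Set.range β)) (n : ℕ) (z : Z) :
    expProd Q β n z ≤ mSup Q β n :=
  le_ciSup (bddAbove_range_expProd hβ0 hβb n) z

lemma integrable_expProd (hβm : Measurable β) (hβ0 : ∀ z, 0 ≤ β z)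
    (hβb : BddAbove (Set.range β)) (n : ℕ) (z : Z) : Integrable (expProd Q β n) (Q z) := by
  refine .of_bound (measurable_expProd hβm n).aestronglyMeasurable (mSup Q β n)
    (ae_of_all _ fun z' => ?_)
  rw [Real.norm_of_nonneg (expProd_nonneg hβ0 n z')]
  exact expProd_le_mSup hβ0 hβb n z'

end ExpProd

/-- The state-dependent Lipschitz bound of the long-run contractivity assumption, imposed on an
operator `T` over `W` instead of on the aggregator `H`, so that it covers both `T_σ` and the
Bellman operator. The inner supremum need not be measurable in `z'`, in which case the integral
is `0`. -/
def DiscountedLipschitzOn {X Z : Type*} [MeasurableSpace Z] (Q : Kernel Z Z) (β : Z → ℝ)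
    (T : (X × Z → ℝ) → X × Z → ℝ) (W : Set (X × Z → ℝ)) : Prop :=
  ∀ v ∈ W, ∀ w ∈ W, ∀ p,
    |T v p - T w p| ≤ β p.2 * ∫ z', (⨆ x', |v (x', z') - w (x', z')|) ∂(Q p.2)

section DynamicProgram

variable {X Z A : Type*} [MeasurableSpace Z] {Q : Kernel Z Z} {β : Z → ℝ}

namespace DiscountedLipschitzOn

variable {T : (X × Z → ℝ) → X × Z → ℝ} {V W : Set (X × Z → ℝ)} {v w : X × Z → ℝ}

lemma mono (hT : DiscountedLipschitzOn Q β T W) (hVW : V ⊆ W) : DiscountedLipschitzOn Q β T V :=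
  fun v hv w hw => hT v (hVW hv) w (hVW hw)

variable [IsFiniteKernel Q]

lemma abs_iterate_sub_le (hT : DiscountedLipschitzOn Q β T W) (hself : Set.MapsTo T W W)
    (hβm : Measurable β) (hβ0 : ∀ z, 0 ≤ β z) (hβb : BddAbove (Set.range β))
    (hv : v ∈ W) (hw : w ∈ W) (hvw : BddAbove (Set.range fun p => |v p - w p|)) (n : ℕ)
    (p : X × Z) :
    |T^[n] v p - T^[n] w p| ≤ expProd Q β n p.2 * ⨆ q, |v q - w q| := by
  induction n generalizing p with
  | zero => simpa only [expProd, one_mul] using! le_ciSup hvw p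
  | succ n ih =>
    set D := ⨆ q, |v q - w q|
    have hD : 0 ≤ D := Real.iSup_nonneg fun _ => abs_nonneg _
    have hsection (z' : Z) :
        ⨆ x', |T^[n] v (x', z') - T^[n] w (x', z')| ≤ expProd Q β n z' * D :=
      Real.iSup_le (fun x' => ih (x', z')) (mul_nonneg (expProd_nonneg hβ0 n z') hD)
    rw [Function.iterate_succ_apply', Function.iterate_succ_apply']
    calc |T (T^[n] v) p - T (T^[n] w) p|
      _ ≤ β p.2 * ∫ z', (⨆ x', |T^[n] v (x', z') - T^[n] w (x', z')|) ∂(Q p.2) :=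
          hT _ (hself.iterate n hv) _ (hself.iterate n hw) p
      _ ≤ β p.2 * ∫ z', expProd Q β n z' * D ∂(Q p.2) := by
          refine mul_le_mul_of_nonneg_left ?_ (hβ0 p.2)
          -- Only the majorant has to be integrable; the supremum over `x'` may fail to be.
          exact integral_mono_of_nonneg
            (ae_of_all _ fun _ => Real.iSup_nonneg fun _ => abs_nonneg _)
            ((integrable_expProd hβm hβ0 hβb n p.2).mul_const D) (ae_of_all _ hsection)
      _ = expProd Q β (n + 1) p.2 * D := by rw [integral_mul_const, ← mul_assoc, expProd]

lemma iSup_abs_iterate_sub_le (hT : DiscountedLipschitzOn Q β T W) (hself : Set.MapsTo T W W)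
    (hβm : Measurable β) (hβ0 : ∀ z, 0 ≤ β z) (hβb : BddAbove (Set.range β))
    (hv : v ∈ W) (hw : w ∈ W) (hvw : BddAbove (Set.range fun p => |v p - w p|)) (n : ℕ) :
    ⨆ p, |T^[n] v p - T^[n] w p| ≤ mSup Q β n * ⨆ p, |v p - w p| := by
  have hD : 0 ≤ ⨆ p, |v p - w p| := Real.iSup_nonneg fun _ => abs_nonneg _
  refine Real.iSup_le (fun p => ?_) (mul_nonneg (mSup_nonneg hβ0 n) hD)
  exact (hT.abs_iterate_sub_le hself hβm hβ0 hβb hv hw hvw n p).trans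
    (mul_le_mul_of_nonneg_right (expProd_le_mSup hβ0 hβb n p.2) hD)

end DiscountedLipschitzOn

variable {Γ : X → Z → Set A} {H : X → Z → A → (X × Z → ℝ) → ℝ} {𝒱 : Set (X × Z → ℝ)}

lemma discountedLipschitzOn_Tpol
    (hH : ∀ v ∈ 𝒱, ∀ w ∈ 𝒱, ∀ x z a, a ∈ Γ x z →
      |H x z a v - H x z a w| ≤ β z * ∫ z', (⨆ x', |v (x', z') - w (x', z')|) ∂(Q z))
    {σ : X × Z → A} (hσ : ∀ p : X × Z, σ p ∈ Γ p.1 p.2) :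
    DiscountedLipschitzOn Q β (Tpol H σ) 𝒱 :=
  fun v hv w hw p => hH v hv w hw p.1 p.2 (σ p) (hσ p)

lemma discountedLipschitzOn_TBell (hΓ : ∀ x z, (Γ x z).Nonempty)
    (hH : ∀ v ∈ 𝒱, ∀ w ∈ 𝒱, ∀ x z a, a ∈ Γ x z →
      |H x z a v - H x z a w| ≤ β z * ∫ z', (⨆ x', |v (x', z') - w (x', z')|) ∂(Q z)) :
    DiscountedLipschitzOn Q β (TBell H Γ) 𝒱 :=
  fun v hv w hw p => abs_sSup_image_sub_sSup_image_le (hΓ p.1 p.2) (hH v hv w hw p.1 p.2)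

end DynamicProgram

theorem eventually_contracting_general {X Z A : Type*} [MeasurableSpace Z]
    (Q : Kernel Z Z) [IsFiniteKernel Q]
    (Γ : X → Z → Set A) (hΓ : ∀ x z, (Γ x z).Nonempty)
    (H : X → Z → A → (X × Z → ℝ) → ℝ) (𝒱 : Set (X × Z → ℝ))
    (h𝒱 : ∀ v ∈ 𝒱, ∀ w ∈ 𝒱, BddAbove (Set.range fun p => |v p - w p|))
    (β : Z → ℝ) (hβm : Measurable β) (hβ0 : ∀ z, 0 ≤ β z) (hβb : BddAbove (Set.range β))
    (hH : ∀ v ∈ 𝒱, ∀ w ∈ 𝒱, ∀ x z a, a ∈ Γ x z →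
      |H x z a v - H x z a w| ≤ β z * ∫ z', (⨆ x', |v (x', z') - w (x', z')|) ∂(Q z))
    (hcon : ∃ n : ℕ, mSup Q β n < 1) :
    ∃ n : ℕ, ∃ K : ℝ, 0 ≤ K ∧ K < 1 ∧
      (∀ σ : X × Z → A, (∀ p : X × Z, σ p ∈ Γ p.1 p.2) → Set.MapsTo (Tpol H σ) 𝒱 𝒱 →
        ∀ v ∈ 𝒱, ∀ w ∈ 𝒱,
          ⨆ p, |(Tpol H σ)^[n] v p - (Tpol H σ)^[n] w p| ≤ K * ⨆ p, |v p - w p|) ∧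
      (∀ 𝒱hat ⊆ 𝒱, Set.MapsTo (TBell H Γ) 𝒱hat 𝒱hat →
        ∀ v ∈ 𝒱hat, ∀ w ∈ 𝒱hat,
          ⨆ p, |(TBell H Γ)^[n] v p - (TBell H Γ)^[n] w p| ≤ K * ⨆ p, |v p - w p|) := by
  obtain ⟨n, hn⟩ := hcon
  refine ⟨n, mSup Q β n, mSup_nonneg hβ0 n, hn, ?policy, ?bellman⟩
  case policy =>
    intro σ hσ hself v hv w hw
    exact (discountedLipschitzOn_Tpol hH hσ).iSup_abs_iterate_sub_le hself hβm hβ0 hβb hv hw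
      (h𝒱 v hv w hw) n
  case bellman =>
    intro 𝒱hat hsub hself v hv w hw
    exact ((discountedLipschitzOn_TBell hΓ hH).mono hsub).iSup_abs_iterate_sub_le hself
      hβm hβ0 hβb hv hw (h𝒱 v (hsub hv) w (hsub hw)) n

/-- **Eventual contractivity of `T_σ` and `T`.**
Under the long-run contractivity assumption and the self-map assumption, there exists
`n ∈ ℕ` (and a modulus `K < 1`) such that `T_σ^n` is a contraction on `𝒱` with the
supremum metric for every feasible policy `σ ∈ Σ`, and `T^n` is a contraction on `𝒱̂`:
`T_σ` and `T` are eventually contracting. -/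
theorem eventually_contracting
    {X Z A : Type*} [MetricSpace X] [MeasurableSpace X] [BorelSpace X] [Nonempty X]
    [MetricSpace Z] [MeasurableSpace Z] [BorelSpace Z] [Nonempty Z]
    [MetricSpace A] [TopologicalSpace.SeparableSpace A] [MeasurableSpace A] [BorelSpace A]
    (Q : ProbabilityTheory.Kernel Z Z) [IsMarkovKernel Q]
    (Γ : X → Z → Set A) (hΓ : ∀ x z, (Γ x z).Nonempty)
    (H : X → Z → A → ((X × Z) → ℝ) → ℝ)
    -- `𝒱` is a set of bounded Borel measurable real functions on `S = X × Z`.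
    (𝒱 : Set ((X × Z) → ℝ))
    (h𝒱 : ∀ v ∈ 𝒱, Measurable v ∧ ∃ M, ∀ p, |v p| ≤ M)
    -- Long-run contractivity assumption.
    (β : Z → ℝ) (hβm : Measurable β) (hβ0 : ∀ z, 0 ≤ β z) (hβb : ∃ C, ∀ z, β z ≤ C)
    (hH : ∀ v ∈ 𝒱, ∀ w ∈ 𝒱, ∀ x z a, a ∈ Γ x z →
      |H x z a v - H x z a w| ≤
        β z * ∫ z', (⨆ x' : X, |v (x', z') - w (x', z')|) ∂(Q z))
    (hcon : ∃ n : ℕ, mSup Q β n < 1)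
    -- Self-map assumption: `𝒱` is complete under the supremum metric, ...
    (hcomplete : ∀ f : ℕ → ((X × Z) → ℝ), (∀ k, f k ∈ 𝒱) →
      (∀ ε : ℝ, 0 < ε → ∃ N, ∀ m ≥ N, ∀ n ≥ N, ∀ p, |f m p - f n p| ≤ ε) →
      ∃ g ∈ 𝒱, TendstoUniformly f g atTop)
    -- ... `T_σ` maps `𝒱` into itself for every feasible policy `σ`, ...
    (hTσself : ∀ σ : X × Z → A, Measurable σ → (∀ p : X × Z, σ p ∈ Γ p.1 p.2) →
      ∀ v ∈ 𝒱, Tpol H σ v ∈ 𝒱)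
    -- ... and `𝒱̂ ⊆ 𝒱` is closed (under uniform convergence) with `T` a self-map on it.
    (𝒱hat : Set ((X × Z) → ℝ)) (hsub : 𝒱hat ⊆ 𝒱)
    (hclosed : ∀ f : ℕ → ((X × Z) → ℝ), (∀ k, f k ∈ 𝒱hat) →
      ∀ g ∈ 𝒱, TendstoUniformly f g atTop → g ∈ 𝒱hat)
    (hTself : ∀ v ∈ 𝒱hat, TBell H Γ v ∈ 𝒱hat) :
    ∃ n : ℕ, ∃ K : ℝ, 0 ≤ K ∧ K < 1 ∧
      (∀ σ : X × Z → A, Measurable σ → (∀ p : X × Z, σ p ∈ Γ p.1 p.2) →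
        ∀ v ∈ 𝒱, ∀ w ∈ 𝒱,
          (⨆ p : X × Z, |(Tpol H σ)^[n] v p - (Tpol H σ)^[n] w p|) ≤
            K * ⨆ p : X × Z, |v p - w p|) ∧
      (∀ v ∈ 𝒱hat, ∀ w ∈ 𝒱hat,
        (⨆ p : X × Z, |(TBell H Γ)^[n] v p - (TBell H Γ)^[n] w p|) ≤
          K * ⨆ p : X × Z, |v p - w p|) := by
  obtain ⟨n, K, hK0, hK1, hpol, hbell⟩ := eventually_contracting_general Q Γ hΓ H 𝒱
    (fun v hv w hw => bddAbove_range_abs_sub (h𝒱 v hv).2 (h𝒱 w hw).2) β hβm hβ0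
    (hβb.imp fun _ hC => Set.forall_mem_range.2 hC) hH hcon
  exact ⟨n, K, hK0, hK1, fun σ hσ hσΓ => hpol σ hσΓ (hTσself σ hσ hσΓ), hbell 𝒱hat hsub hTself⟩
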